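/- arXiv:1009.4136 — 2 statements merged into one kernel-verified Lean document; each statement's English description precedes it below -/
import Mathlib

section
/- Let G be a finite group, H ≤ G a subgroup, and let ρ be an irreducible complex representation of G chosen according to the Plancherel measure. With X_H = ⟨Res_H χ_ρ, 1⟩_H / d_ρ, the variance satisfies Var_ρ[X_H] = (1/|H|²) · Σ_{h ∈ H, h ≠ 1} |h^G ∩ H| / |h^G|, where h^G = {g⁻¹ h g : g ∈ G} is the conjugacy class of h in G. -/
/-!
Expanding `X_H` as an average of characters over `H`, the factors `d_ρ²` of the Plancherel weights
cancel the denominators, and both moments become sums over `H` of products of two columns of the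
character table. By column orthogonality (`column_orthogonality`) the mean is `1 / |H|` and the
second moment is `|H|⁻² ∑_{h ∈ H} |h^G ∩ H| / |h^G|`; the squared mean removes the term `h = 1`.

Column orthogonality follows from row orthogonality together with the completeness of irreducible
characters among class functions (`classFunction_eq_zero`), which rests on Schur's lemma and the
semisimplicity of the group algebra.
-/

open CategoryTheory
open scoped Classical

lemma simple_of_isIrreducible {G : Type} [Group G] [Fintype G] {V : Type}
   [AddCommGroup V] [Module ℂ V] [Module.Finite ℂ V]
   (ρ : Representation ℂ G V) [ρ.IsIrreducible] : Simple (FDRep.of ρ) := by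
  rw [FDRep.simple_iff_char_is_norm_one]
  have hG : (Nat.card G : ℂ) ≠ 0 := by simp
  have := invertibleOfNonzero hG
  have h := Representation.char_orthonormal ρ ρ
  rw [if_pos ⟨Representation.Equiv.refl ρ⟩, inv_mul_eq_one₀ hG] at h
  exact h.symm

/-- The simple `ℂ[G]`-module `M` keeps its own `ℂ`-structure, so that the result applies directly to
quotients of `ℂ[G]` by maximal left ideals. -/
lemma isIrreducible_ofModule' {G : Type} [Group G] {M : Type} [AddCommGroup M]
   [Module ℂ M] [Module (MonoidAlgebra ℂ G) M] [IsScalarTower ℂ (MonoidAlgebra ℂ G) M]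
   [IsSimpleModule (MonoidAlgebra ℂ G) M] :
   (Representation.ofModule' (k := ℂ) (G := G) M).IsIrreducible := by
  rw [Representation.irreducible_iff_isSimpleModule_asModule]
  set ρ := Representation.ofModule' (k := ℂ) (G := G) M with hρ
  have key : ρ.asAlgebraHom = Algebra.lsmul ℂ ℂ M :=
      (MonoidAlgebra.lift ℂ (M →ₗ[ℂ] M) G).apply_symm_apply _
  refine IsSimpleModule.congr (N := M) (R := (MonoidAlgebra ℂ G))
    { ρ.asModuleEquiv with
      map_smul' := fun a v => ?_ }
  have := ρ.asModuleEquiv_map_smul a v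
  rw [key] at this
  exact this

/-- Irreducible characters span the class functions: a class function `f` pairing to zero with all of
them vanishes. The element `z = ∑ f(g) g` is central, so it acts on each simple module by a scalar
(Schur) whose trace is `∑ f(g) χ(g) = 0`; hence `z` kills all simple modules, lies in the Jacobson
radical, and is zero because `ℂ[G]` is semisimple (Maschke). -/
lemma classFunction_eq_zero {G : Type} [Group G] [Fintype G] (f : G → ℂ)
   (hf : ∀ x g, f (x * g) = f (g * x))
   (h : ∀ V : FDRep ℂ G, Simple V → ∑ g, f g * V.character g = 0) : f = 0 := by
  set z : (MonoidAlgebra ℂ G) := ∑ g, MonoidAlgebra.single g (f g) with hz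
  have hcoe : ∀ g, z.coeff g = f g := by
    intro g
    simp [hz, MonoidAlgebra.coeff_sum, Finsupp.single_apply]
  have hcomm : ∀ a : (MonoidAlgebra ℂ G), a * z = z * a := by
    intro a
    induction a using MonoidAlgebra.induction_on with
    | of x =>
      ext g
      simp only [MonoidAlgebra.of_apply]
      rw [MonoidAlgebra.coeff_single_mul_eq_mul_coeff (x⁻¹ * g)
          fun y _ => eq_inv_mul_iff_mul_eq.symm,
        MonoidAlgebra.coeff_mul_single_eq_coeff_mul (g * x⁻¹)
          fun y _ => eq_mul_inv_iff_mul_eq.symm,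
        hcoe, hcoe, hf, one_mul, mul_one]
    | add a b ha hb => rw [add_mul, mul_add, ha, hb]
    | smul r a ha => rw [smul_mul_assoc, mul_smul_comm, ha]
  have hann : ∀ (M : Type) [AddCommGroup M] [Module ℂ M] [Module (MonoidAlgebra ℂ G) M]
      [IsScalarTower ℂ (MonoidAlgebra ℂ G) M] [IsSimpleModule (MonoidAlgebra ℂ G) M] (m : M),
      z • m = 0 := by
    intro M _ _ _ _ _ m
    let ρ : Representation ℂ G M := Representation.ofModule' M
    have : ρ.IsIrreducible := isIrreducible_ofModule'
    have : Module.Finite ℂ M := Module.Finite.trans (MonoidAlgebra ℂ G) M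
    let φ : Module.End (MonoidAlgebra ℂ G) M :=
      { toFun := fun v => z • v, map_add' := smul_add z, map_smul' := by
          intro a v
          simp only [RingHom.id_apply, smul_smul, hcomm] }
    obtain ⟨c, hc⟩ :=
      (IsSimpleModule.algebraMap_end_bijective_of_isAlgClosed
        (A := MonoidAlgebra ℂ G) (V := M) ℂ).2 φ
    have hc' : ∀ v : M, c • v = z • v := fun v => congr($hc v)
    have h0 := h (FDRep.of ρ) (simple_of_isIrreducible ρ)
    have hzρ : ∑ g, f g • ρ g = c • LinearMap.id := by
      ext v
      simp only [LinearMap.sum_apply, LinearMap.smul_apply, LinearMap.id_apply, hc', hz,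
        Finset.sum_smul]
      refine Finset.sum_congr rfl fun x _ => ?_
      have e : MonoidAlgebra.single x (f x) = f x • MonoidAlgebra.single x (1 : ℂ) := by simp
      rw [e, smul_assoc]
      simp [ρ, Representation.ofModule']
    have htr : ∑ g, f g * (FDRep.of ρ).character g = LinearMap.trace ℂ M (c • LinearMap.id) := by
      rw [← hzρ, map_sum]
      refine Finset.sum_congr rfl fun g _ => ?_
      rw [map_smul]
      rfl
    have : Nontrivial M := IsSimpleModule.nontrivial (MonoidAlgebra ℂ G) M
    rw [h0, map_smul, LinearMap.trace_id, smul_eq_mul, eq_comm, mul_eq_zero] at htr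
    rcases htr with hh | hh
    · rw [← hc', hh, zero_smul]
    · exact absurd hh (by exact_mod_cast Module.finrank_pos.ne')
  have hz0 : z ∈ Ring.jacobson (MonoidAlgebra ℂ G) := by
    refine Submodule.mem_sInf.2 fun I hI => ?_
    have : IsSimpleModule (MonoidAlgebra ℂ G) (MonoidAlgebra ℂ G ⧸ I) := isSimpleModule_iff_isCoatom.2 hI
    have := hann (MonoidAlgebra ℂ G ⧸ I) (Submodule.Quotient.mk 1)
    rwa [← Submodule.Quotient.mk_smul, smul_eq_mul, mul_one, Submodule.Quotient.mk_eq_zero] at this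
  rw [IsSemisimpleRing.jacobson_eq_bot] at hz0
  ext g
  rw [← hcoe, (Submodule.mem_bot _).1 hz0]
  rfl

/-- Second orthogonality relation, with `|G| / |g^G|` in place of the order of the centralizer. Both
sides are class functions of `h` with the same inner product against each irreducible character by
the first orthogonality relation. -/
lemma column_orthogonality {G : Type} [Group G] [Fintype G]
    {ι : Type} [Fintype ι] (ρ : ι → FDRep ℂ G)
    (hirr : ∀ i, Simple (ρ i))
    (hdisj : ∀ i j : ι, Nonempty (ρ i ≅ ρ j) → i = j)
    (hcomplete : ∀ V : FDRep ℂ G, Simple V → ∃ i, Nonempty (V ≅ ρ i)) (g h : G) :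
    ∑ i, (ρ i).character g⁻¹ * (ρ i).character h = if IsConj g h then
      (Fintype.card G : ℂ) / Fintype.card {x : G // IsConj g x} else 0 := by
  have hcl : (Fintype.card {x : G // IsConj g x} : ℂ) ≠ 0 := by
    have : Nonempty {x : G // IsConj g x} := ⟨⟨g, IsConj.refl g⟩⟩
    exact_mod_cast Fintype.card_ne_zero
  have hG : (Nat.card G : ℂ) ≠ 0 := by simp
  have := invertibleOfNonzero hG
  -- Substituting `h⁻¹` for `h` matches the bilinear pairing `∑ f(x) χ(x)`, which involves no inverse,
  -- to the first orthogonality relation.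
  suffices H : (fun h : G => ∑ i, (ρ i).character g⁻¹ * (ρ i).character h⁻¹ - if IsConj g h⁻¹ then
      (Fintype.card G : ℂ) / Fintype.card {x : G // IsConj g x} else 0) = 0 by
    simpa using! sub_eq_zero.1 (congrFun H h⁻¹)
  apply classFunction_eq_zero
  · intro x y
    have : IsConj (x * y)⁻¹ (y * x)⁻¹ := isConj_iff.2 ⟨y, by group⟩
    have e : IsConj g (x * y)⁻¹ ↔ IsConj g (y * x)⁻¹ :=
      ⟨fun h => h.trans this, fun h => h.trans this.symm⟩
    simp only [e]
    congr! 3 with i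
    simp only [mul_inv_rev]
    rw [FDRep.char_mul_comm]
  · intro V hV
    obtain ⟨j, ⟨e⟩⟩ := hcomplete V hV
    rw [FDRep.char_iso e]
    have orth : ∀ i, ∑ x, (ρ i).character x⁻¹ * (ρ j).character x =
        if i = j then (Nat.card G : ℂ) else 0 := by
      intro i
      have := hirr i
      have := hirr j
      have o := FDRep.char_orthonormal (ρ j) (ρ i)
      have e : Nonempty (ρ j ≅ ρ i) ↔ i = j :=
        ⟨fun h => (hdisj _ _ h).symm, fun h => h ▸ ⟨Iso.refl _⟩⟩
      rw [inv_mul_eq_iff_eq_mul₀ hG] at o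
      simp only [e] at o
      simp only [mul_comm ((ρ i).character _), o]
      simp
    simp only [sub_mul, Finset.sum_sub_distrib, Finset.sum_mul]
    rw [Finset.sum_comm]
    simp only [mul_assoc, ← Finset.mul_sum, orth]
    have hc : ∀ x, (if IsConj g x⁻¹ then
      (Fintype.card G : ℂ) / Fintype.card {x : G // IsConj g x} else 0) * (ρ j).character x = if IsConj g x⁻¹ then
      (Fintype.card G : ℂ) / Fintype.card {x : G // IsConj g x} * (ρ j).character g⁻¹ else 0 := by
      intro x
      split_ifs with hx
      · obtain ⟨c, hc⟩ := isConj_iff.1 hx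
        rw [show x = c * g⁻¹ * c⁻¹ by rw [← inv_inj, ← hc]; group, FDRep.char_conj]
      · simp
    simp only [hc]
    rw [← Equiv.sum_comp (Equiv.inv G)]
    simp only [Equiv.inv_apply, inv_inv]
    rw [← Finset.sum_filter, Finset.sum_const, nsmul_eq_mul, Fintype.card_subtype]
    rw [Fintype.card_subtype] at hcl
    simp only [mul_ite, mul_zero, Finset.sum_ite_eq', Finset.mem_univ, if_true,
      Nat.card_eq_fintype_card]
    field_simp
    simp

/-- For a finite group `G`, a complete family of pairwise non-isomorphic
irreducible complex representations, a subgroup `H ≤ G`, and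
`X_H = ⟨Res_H χ_ρ, 1⟩_H / d_ρ`, the variance over the Plancherel measure satisfies
`Var_ρ[X_H] = (1/|H|²) · Σ_{h ∈ H, h ≠ 1} |h^G ∩ H| / |h^G|`,
where `h^G` is the conjugacy class of `h` in `G`. -/
theorem plancherel_variance_of_trivial_multiplicity_fraction
    {G : Type} [Group G] [Fintype G]
    (ι : Type) [Fintype ι] (ρ : ι → FDRep ℂ G)
    (hirr : ∀ i, Simple (ρ i))
    (hdisj : ∀ i j : ι, Nonempty (ρ i ≅ ρ j) → i = j)
    (hcomplete : ∀ V : FDRep ℂ G, Simple V → ∃ i, Nonempty (V ≅ ρ i))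
    (H : Subgroup G) :
    (∑ i : ι, ((Module.finrank ℂ (ρ i) : ℂ) ^ 2 / (Fintype.card G : ℂ)) *
        ((((Fintype.card H : ℂ)⁻¹ * ∑ h : H, (ρ i).character (h : G)) /
          (Module.finrank ℂ (ρ i) : ℂ)) ^ 2))
      - (∑ i : ι, ((Module.finrank ℂ (ρ i) : ℂ) ^ 2 / (Fintype.card G : ℂ)) *
          (((Fintype.card H : ℂ)⁻¹ * ∑ h : H, (ρ i).character (h : G)) /
            (Module.finrank ℂ (ρ i) : ℂ))) ^ 2
      = ((Fintype.card H : ℂ) ^ 2)⁻¹ *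
          ∑ h ∈ Finset.univ.filter (fun h : H => (h : G) ≠ 1),
            (Fintype.card {x : G // IsConj (h : G) x ∧ x ∈ H} : ℂ) /
              (Fintype.card {x : G // IsConj (h : G) x} : ℂ) := by
  have hG : (Fintype.card G : ℂ) ≠ 0 := by simp
  have hH : (Fintype.card H : ℂ) ≠ 0 := by simp
  have col := column_orthogonality ρ hirr hdisj hcomplete
  -- A representation of dimension zero has zero character, contradicting norm one.
  have hd : ∀ i, (Module.finrank ℂ (ρ i) : ℂ) ≠ 0 := by
    intro i h0
    have := hirr i
    have hn := (FDRep.simple_iff_char_is_norm_one (ρ i)).1 this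
    have : Subsingleton (ρ i) := Module.finrank_zero_iff.1 (by exact_mod_cast h0)
    have hz : ∀ g, (ρ i).character g = 0 := fun g => by
      have : (ρ i).ρ g = 0 := LinearMap.ext fun _ => Subsingleton.elim _ _
      simp [FDRep.character, this]
    simp only [hz, mul_zero, Finset.sum_const_zero, Nat.card_eq_fintype_card] at hn
    exact hG hn.symm
  have one_class : Fintype.card {x : G // IsConj (1 : G) x} = 1 := by
    rw [Fintype.card_eq_one_iff]
    exact ⟨⟨1, IsConj.refl 1⟩, fun y => Subtype.ext (isConj_one_right.1 y.2)⟩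
  -- The mean is `1 / |H|`: pair the columns of `1` and `h`, using `d_i = χ_i(1)`.
  have mean : ∑ i : ι, ((Module.finrank ℂ (ρ i) : ℂ) ^ 2 / (Fintype.card G : ℂ)) *
          (((Fintype.card H : ℂ)⁻¹ * ∑ h : H, (ρ i).character (h : G)) /
            (Module.finrank ℂ (ρ i) : ℂ)) = (Fintype.card H : ℂ)⁻¹ := by
    calc _ = (Fintype.card G : ℂ)⁻¹ * (Fintype.card H : ℂ)⁻¹ *
          ∑ h : H, ∑ i, (ρ i).character (1 : G)⁻¹ * (ρ i).character (h : G) := by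
            rw [Finset.sum_comm]
            simp only [← Finset.mul_sum]
            rw [Finset.mul_sum]
            refine Finset.sum_congr rfl fun i _ => ?_
            rw [inv_one, FDRep.char_one]
            have := hd i
            field_simp
      _ = (Fintype.card G : ℂ)⁻¹ * (Fintype.card H : ℂ)⁻¹ * Fintype.card G := by
            simp only [col, isConj_one_right]
            simp
      _ = _ := by field_simp
  -- The second moment carries the sum over all of `H`, since `d_i²` cancels and the columns of `h⁻¹`
  -- and `k` are paired for all `h, k ∈ H`.
  have second : ∑ i : ι, ((Module.finrank ℂ (ρ i) : ℂ) ^ 2 / (Fintype.card G : ℂ)) *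
        ((((Fintype.card H : ℂ)⁻¹ * ∑ h : H, (ρ i).character (h : G)) /
          (Module.finrank ℂ (ρ i) : ℂ)) ^ 2) = ((Fintype.card H : ℂ) ^ 2)⁻¹ * ∑ h : H,
            (Fintype.card {x : G // IsConj (h : G) x ∧ x ∈ H} : ℂ) /
              (Fintype.card {x : G // IsConj (h : G) x} : ℂ) := by
    calc _ = (Fintype.card G : ℂ)⁻¹ * ((Fintype.card H : ℂ) ^ 2)⁻¹ *
          ∑ h : H, ∑ k : H, ∑ i, (ρ i).character (h : G)⁻¹ * (ρ i).character (k : G) := by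
            have e : ∀ h : H, ∑ k : H, ∑ i, (ρ i).character (h : G)⁻¹ * (ρ i).character (k : G)
              = ∑ i, (ρ i).character (h : G)⁻¹ * ∑ k : H, (ρ i).character (k : G) := by
              intro h
              rw [Finset.sum_comm]
              simp only [← Finset.mul_sum]
            simp only [e]
            rw [Finset.sum_comm]
            simp only [← Finset.sum_mul]
            rw [Finset.mul_sum]
            refine Finset.sum_congr rfl fun i _ => ?_
            -- Inverting `h` permutes `H`, which brings in the inverse of the column relation.
            have inv : ∑ h : H, (ρ i).character (h : G)⁻¹ = ∑ h : H, (ρ i).character (h : G) := by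
              rw [← Equiv.sum_comp (Equiv.inv H)]
              simp
            rw [inv]
            have := hd i
            field_simp
      _ = (Fintype.card G : ℂ)⁻¹ * ((Fintype.card H : ℂ) ^ 2)⁻¹ * ∑ h : H, Fintype.card G * (
            (Fintype.card {x : G // IsConj (h : G) x ∧ x ∈ H} : ℂ) /
              (Fintype.card {x : G // IsConj (h : G) x} : ℂ)) := by
            congr 1
            refine Finset.sum_congr rfl fun h _ => ?_
            simp only [col]
            rw [← Finset.sum_filter, Finset.sum_const, nsmul_eq_mul, ← Fintype.card_subtype,
              Fintype.card_congr (show {k : H // IsConj (h : G) k} ≃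
                {x : G // IsConj (h : G) x ∧ x ∈ H} from
                  ⟨fun k => ⟨k.1.1, k.2, k.1.2⟩, fun x => ⟨⟨x.1, x.2.2⟩, x.2.1⟩,
                    fun _ => rfl, fun _ => rfl⟩)]
            ring
      _ = _ := by
            rw [← Finset.mul_sum]
            field_simp
  -- The squared mean is exactly the term `h = 1` of the second moment.
  rw [mean, second, ← Finset.sum_filter_not_add_sum_filter _ (fun h : H => (h : G) ≠ 1)]
  have single : Finset.univ.filter (fun h : H => ¬ (h : G) ≠ 1) = {1} := by
    ext h; simp
  have one_inter : Fintype.card {x : G // IsConj (1 : G) x ∧ x ∈ H} = 1 := by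
    rw [Fintype.card_eq_one_iff]
    exact ⟨⟨1, IsConj.refl 1, H.one_mem⟩, fun y => Subtype.ext (isConj_one_right.1 y.2.1)⟩
  rw [single, Finset.sum_singleton, Subgroup.coe_one, one_inter, one_class]
  field_simp
  ring
end

section
/- There exists a sequence of finite groups G_n with nontrivial irreducible unitary complex representations ρ_n such that for every fixed t ≥ 1, if g₁, …, g_t are chosen independently and uniformly at random from G_n, then Pr[‖(1/t) Σ_{i=1}^t ρ_n(gᵢ)‖_op = 1] → 1 as n → ∞. (Concretely, one may take G_n = Kⁿ for any fixed finite group K with trivial center and a suitable irreducible representation ρ_n of Kⁿ.) -/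
/-!
The groups are the wreath products `Gₙ = {±1} ≀ Hₙ` with `Hₙ = (ℤ/2)ⁿ` acting on itself by
translation, and `ρₙ` is the monomial representation of `Gₙ` on `ℂ^Hₙ` by signed translations.

Irreducibility: flipping the sign at one point `x` and subtracting isolates the `x`-coordinate, so a
nonzero invariant subspace contains a basis vector, hence all of them by translation.

Norm one: let `g₁, …, g_t` have translation parts `h₁, …, h_t`, generating a subgroup `S` of order at
most `2 ^ t`. If all `t` sign functions are trivial on some coset of `S`, then the indicator function
of that coset is fixed by every `ρₙ(gᵢ)`, so the average has norm `1`. For fixed `hᵢ`, the sign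
patterns on the `|Hₙ / S| ≥ 2 ^ (n - t)` cosets are independent, and each is trivial with probability
at least `δ = (2 ^ t) ^ (-2 ^ t)`, which does not depend on `n`. Hence the probability that the norm
differs from `1` is at most `(1 - δ) ^ (n - t)`, which tends to `0`.
-/

open scoped Classical

/-- A finite group together with a finite-dimensional unitary complex representation of it:
a homomorphism into the group of unitary operators (linear isometric equivalences) of a
finite-dimensional complex inner product space. -/
structure FinGroupUnitaryRep where
  /-- the group -/
  G : Type
  [grp : Group G]
  [ftG : Fintype G]
  /-- the representation space -/
  E : Type
  [nacg : NormedAddCommGroup E]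
  [ips : InnerProductSpace ℂ E]
  [fd : FiniteDimensional ℂ E]
  /-- the homomorphism into the unitary group of `E` -/
  rho : G →* (E ≃ₗᵢ[ℂ] E)

attribute [instance] FinGroupUnitaryRep.grp FinGroupUnitaryRep.ftG
  FinGroupUnitaryRep.nacg FinGroupUnitaryRep.ips FinGroupUnitaryRep.fd

/-! ### The wreath product -/

/-- The wreath product of `{±1}` with a finite abelian group `H` acting on itself by translation:
an element consists of a sign function on `H` and a translation. -/
@[ext] structure SignedTranslation (H : Type) where
  /-- the sign function -/
  sgn : H → ℤˣ
  /-- the translation part -/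
  shift : H

namespace SignedTranslation

variable {H : Type} [AddCommGroup H]

instance : Mul (SignedTranslation H) :=
  ⟨fun a b => ⟨fun x => a.sgn x * b.sgn (x - a.shift), a.shift + b.shift⟩⟩

instance : One (SignedTranslation H) := ⟨⟨fun _ => 1, 0⟩⟩

instance : Inv (SignedTranslation H) :=
  ⟨fun a => ⟨fun x => (a.sgn (x + a.shift))⁻¹, -a.shift⟩⟩

@[simp] lemma mul_sgn (a b : SignedTranslation H) (x : H) :
    (a * b).sgn x = a.sgn x * b.sgn (x - a.shift) := rfl

@[simp] lemma mul_shift (a b : SignedTranslation H) : (a * b).shift = a.shift + b.shift := rfl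

@[simp] lemma one_sgn (x : H) : (1 : SignedTranslation H).sgn x = 1 := rfl

@[simp] lemma one_shift : (1 : SignedTranslation H).shift = 0 := rfl

@[simp] lemma inv_sgn (a : SignedTranslation H) (x : H) :
    (a⁻¹).sgn x = (a.sgn (x + a.shift))⁻¹ := rfl

@[simp] lemma inv_shift (a : SignedTranslation H) : (a⁻¹).shift = -a.shift := rfl

instance : Group (SignedTranslation H) :=
  Group.ofLeftAxioms
    (fun a b c => by
      ext x
      · simp [mul_assoc, sub_sub]
      · simp [add_assoc])
    (fun a => by ext x <;> simp)
    (fun a => by ext x <;> simp)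

/-- An element is a sign function together with a translation. -/
def equivProd (H : Type) : SignedTranslation H ≃ (H → ℤˣ) × H where
  toFun a := (a.sgn, a.shift)
  invFun p := ⟨p.1, p.2⟩
  left_inv _ := rfl
  right_inv _ := rfl

noncomputable instance [Fintype H] : Fintype (SignedTranslation H) :=
  Fintype.ofEquiv _ (equivProd H).symm

/-! ### The monomial representation -/

/-- The action of a signed translation on functions `H → ℂ`:
`(a • f) x = sgn x * f (x - shift)`. -/
noncomputable def actLin (a : SignedTranslation H) :
    EuclideanSpace ℂ H →ₗ[ℂ] EuclideanSpace ℂ H where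
  toFun f := WithLp.toLp 2 fun x => (((a.sgn x : ℤˣ) : ℤ) : ℂ) * f (x - a.shift)
  map_add' f g := by ext x; simp [mul_add]
  map_smul' c f := by ext x; simp; ring

@[simp] lemma actLin_apply (a : SignedTranslation H) (f : EuclideanSpace ℂ H) (x : H) :
    actLin a f x = (((a.sgn x : ℤˣ) : ℤ) : ℂ) * f (x - a.shift) := rfl

lemma actLin_mul (a b : SignedTranslation H) (f : EuclideanSpace ℂ H) :
    actLin (a * b) f = actLin a (actLin b f) := by
  ext x
  simp [mul_assoc, sub_sub]

lemma actLin_one (f : EuclideanSpace ℂ H) : actLin (1 : SignedTranslation H) f = f := by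
  ext x
  simp

variable [Fintype H]

lemma norm_actLin (a : SignedTranslation H) (f : EuclideanSpace ℂ H) :
    ‖actLin a f‖ = ‖f‖ := by
  rw [EuclideanSpace.norm_eq, EuclideanSpace.norm_eq]
  congr 1
  rw [← (Equiv.subRight a.shift).sum_comp (fun x => ‖f x‖ ^ 2)]
  refine Finset.sum_congr rfl fun x _ => ?_
  have h1 : ‖(((a.sgn x : ℤˣ) : ℤ) : ℂ)‖ = 1 := by
    rcases Int.units_eq_one_or (a.sgn x) with h | h <;> simp [h]
  rw [actLin_apply, norm_mul, h1, one_mul, Equiv.subRight_apply]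

/-- The monomial unitary representation of the wreath product on `ℂ^H`. -/
noncomputable def rep : SignedTranslation H →* (EuclideanSpace ℂ H ≃ₗᵢ[ℂ] EuclideanSpace ℂ H) where
  toFun a :=
    { toLinearEquiv := LinearEquiv.ofLinearMap (actLin a) (actLin a⁻¹)
        (by ext1 f; simp only [LinearMap.comp_apply, ← actLin_mul, mul_inv_cancel, actLin_one]; rfl)
        (by ext1 f; simp only [LinearMap.comp_apply, ← actLin_mul, inv_mul_cancel, actLin_one]; rfl)
      norm_map' := norm_actLin a }
  map_one' := by ext1 f; exact actLin_one f
  map_mul' a b := by ext1 f; exact actLin_mul a b f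

lemma rep_apply (a : SignedTranslation H) (f : EuclideanSpace ℂ H) : rep a f = actLin a f := rfl

/-! ### Irreducibility -/

/-- The element changing the sign at a single point. -/
noncomputable def flip (x : H) : SignedTranslation H := ⟨fun y => if y = x then -1 else 1, 0⟩

/-- Subtracting the single-point flip from a vector isolates one coordinate. -/
lemma sub_flip (x : H) (f : EuclideanSpace ℂ H) :
    f - rep (flip x) f = (2 * f x) • EuclideanSpace.single x (1 : ℂ) := by
  ext y
  rw [rep_apply]
  by_cases h : y = x
  · subst h
    simp [flip]
    ring
  · simp [flip, h]

lemma rep_irreducible (U : Submodule ℂ (EuclideanSpace ℂ H))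
    (hU : ∀ g : SignedTranslation H, ∀ v ∈ U, rep g v ∈ U) : U = ⊥ ∨ U = ⊤ := by
  by_cases hb : U = ⊥
  · exact Or.inl hb
  right
  obtain ⟨f, hf, hf0⟩ := (Submodule.ne_bot_iff U).1 hb
  obtain ⟨x, hx⟩ : ∃ x, f x ≠ 0 := by
    by_contra! h
    exact hf0 (by ext x; simpa using h x)
  have h1 : EuclideanSpace.single x (1 : ℂ) ∈ U := by
    have := U.sub_mem hf (hU (flip x) f hf)
    rw [sub_flip] at this
    exact (U.smul_mem_iff (mul_ne_zero two_ne_zero hx)).1 this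
  have h2 : ∀ y, EuclideanSpace.single y (1 : ℂ) ∈ U := by
    intro y
    have := hU ⟨fun _ => 1, y - x⟩ _ h1
    convert this using 1
    ext z
    rw [rep_apply]
    have : z - (y - x) = x ↔ z = y := by
      constructor
      · intro h
        rw [sub_eq_iff_eq_add] at h
        rw [h]; abel
      · rintro rfl; abel
    simp [this]
  rw [eq_top_iff]
  intro v _
  have hv : v = ∑ y, v y • EuclideanSpace.single y (1 : ℂ) := by
    ext z
    simp [Pi.single_apply]
  rw [hv]
  exact U.sum_mem fun y _ => U.smul_mem _ (h2 y)

lemma rep_nontrivial : ∃ g : SignedTranslation H, rep g ≠ 1 := by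
  refine ⟨flip 0, fun h => ?_⟩
  have := sub_flip (0 : H) (EuclideanSpace.single 0 1)
  rw [h] at this
  have := congrArg (fun f : EuclideanSpace ℂ H => f 0) this
  simp at this

/-! ### Averages of norm one -/

/-- If the signs of all `g i` are trivial on a coset `q` of a subgroup containing all the
translation parts, then the indicator function of `q` is a common fixed vector, so the average of
the operators has norm one. -/
lemma norm_average_eq_one {t : ℕ} (ht : 1 ≤ t) (g : Fin t → SignedTranslation H)
    (S : AddSubgroup H) (hS : ∀ i, (g i).shift ∈ S) (q : H ⧸ S)
    (hq : ∀ x : H, (x : H ⧸ S) = q → ∀ i, (g i).sgn x = 1) :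
    ‖(t : ℂ)⁻¹ • ∑ i : Fin t, ((rep (g i)).toContinuousLinearEquiv.toContinuousLinearMap)‖ = 1 := by
  have ht0 : (t : ℂ) ≠ 0 := by exact_mod_cast (by omega : t ≠ 0)
  have ht1 : (t : ℝ) ≠ 0 := by exact_mod_cast (by omega : t ≠ 0)
  apply le_antisymm
  · refine ContinuousLinearMap.opNorm_le_bound _ zero_le_one fun f => ?_
    rw [smul_apply, sum_apply, norm_smul]
    have : ‖∑ i : Fin t, ((rep (g i)).toContinuousLinearEquiv.toContinuousLinearMap) f‖
        ≤ t * ‖f‖ := by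
      refine (norm_sum_le _ _).trans ?_
      simp
    calc _ ≤ ‖(t : ℂ)⁻¹‖ * (t * ‖f‖) := by gcongr
      _ = 1 * ‖f‖ := by
        rw [norm_inv, Complex.norm_natCast]
        field_simp
  · obtain ⟨x₀, hx₀⟩ := QuotientAddGroup.mk_surjective q
    let f : EuclideanSpace ℂ H := WithLp.toLp 2 fun x => if (x : H ⧸ S) = q then 1 else 0
    have hf : ∀ x, f x = if (x : H ⧸ S) = q then 1 else 0 := fun _ => rfl
    have hf0 : f ≠ 0 := by
      intro h
      have := congrArg (fun f : EuclideanSpace ℂ H => f x₀) h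
      simp [hf, hx₀] at this
    have hfix : ∀ i, ((rep (g i)).toContinuousLinearEquiv.toContinuousLinearMap) f = f := by
      intro i
      change actLin (g i) f = f
      ext x
      rw [actLin_apply, hf, hf]
      have : ((x - (g i).shift : H) : H ⧸ S) = (x : H ⧸ S) := by
        rw [QuotientAddGroup.eq]
        simpa using hS i
      rw [this]
      split_ifs with h
      · simp [hq x h i]
      · simp
    have hT := ContinuousLinearMap.le_opNorm
      ((t : ℂ)⁻¹ • ∑ i : Fin t, ((rep (g i)).toContinuousLinearEquiv.toContinuousLinearMap)) f
    rw [smul_apply, sum_apply,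
      Finset.sum_congr rfl (fun i _ => hfix i), Finset.sum_const, Finset.card_univ,
      Fintype.card_fin, ← Nat.cast_smul_eq_nsmul ℂ, smul_smul, inv_mul_cancel₀ ht0,
      one_smul] at hT
    exact le_of_mul_le_mul_right (by simpa using hT) (norm_pos_iff.2 hf0)

end SignedTranslation

/-! ### Counting sign patterns -/

/-- The number of functions on a finite abelian group that are nowhere constantly `a₀` on a coset
of `S`: on each coset one of the `|A| ^ |S|` patterns is excluded. -/
lemma card_no_constant_coset {H A : Type} [AddCommGroup H] [Finite H] [Finite A]
    (S : AddSubgroup H) (a₀ : A) :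
    Nat.card {w : H → A // ∀ q : H ⧸ S, ∃ x : H, (x : H ⧸ S) = q ∧ w x ≠ a₀}
      ≤ (Nat.card A ^ Nat.card S - 1) ^ Nat.card (H ⧸ S) := by
  have key : ∀ x : H, ∃ s : S, (x : H ⧸ S).out + (s : H) = x := by
    intro x
    refine ⟨⟨-(x : H ⧸ S).out + x, ?_⟩, by simp⟩
    rw [← QuotientAddGroup.eq]
    exact Quotient.out_eq _
  let F : {w : H → A // ∀ q : H ⧸ S, ∃ x : H, (x : H ⧸ S) = q ∧ w x ≠ a₀} →
      (H ⧸ S → {u : S → A // u ≠ fun _ => a₀}) := fun w q => ⟨fun s => w.1 (q.out + s), by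
    obtain ⟨x, hx, hw⟩ := w.2 q
    obtain ⟨s, hs⟩ := key x
    intro h
    have := congrFun h s
    subst hx
    simp only [hs] at this
    exact hw this⟩
  -- Every point is a coset representative plus an element of `S`, so no value of `w` is lost.
  have hF : Function.Injective F := by
    intro w w' h
    ext x
    obtain ⟨s, hs⟩ := key x
    have := congrFun (congrArg Subtype.val (congrFun h (x : H ⧸ S))) s
    simpa [F, hs] using this
  have hcard : Nat.card {u : S → A // u ≠ fun _ => a₀} = Nat.card A ^ Nat.card S - 1 := by
    have := Fintype.ofFinite S
    have := Fintype.ofFinite A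
    rw [← Nat.card_fun, Nat.card_eq_fintype_card, Nat.card_eq_fintype_card]
    exact Set.card_ne_eq _
  calc _ ≤ Nat.card (H ⧸ S → {u : S → A // u ≠ fun _ => a₀}) := Nat.card_le_card_of_injective F hF
    _ = _ := by rw [Nat.card_fun, hcard]

/-- The subgroup generated by `t` elements of `(ℤ/2)ⁿ`, as a linear span. -/
noncomputable def shiftSpan {n t : ℕ} (h : Fin t → Fin n → ZMod 2) : AddSubgroup (Fin n → ZMod 2) :=
  (Submodule.span (ZMod 2) (Set.range h)).toAddSubgroup

lemma shift_mem_shiftSpan {n t : ℕ} (h : Fin t → Fin n → ZMod 2) (i : Fin t) :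
    h i ∈ shiftSpan h :=
  Submodule.subset_span (Set.mem_range_self i)

lemma card_shiftSpan_le {n t : ℕ} (h : Fin t → Fin n → ZMod 2) :
    Nat.card (shiftSpan h) ≤ 2 ^ t := by
  change Nat.card (Submodule.span (ZMod 2) (Set.range h)) ≤ 2 ^ t
  rw [Module.natCard_eq_pow_finrank (K := ZMod 2), Nat.card_zmod]
  refine Nat.pow_le_pow_right (by norm_num) ?_
  simpa [Set.finrank] using finrank_range_le_card (R := ZMod 2) h

lemma sub_le_card_quotient {n t : ℕ} (h : Fin t → Fin n → ZMod 2) :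
    n - t ≤ Nat.card ((Fin n → ZMod 2) ⧸ shiftSpan h) := by
  rcases le_total n t with hnt | hnt
  · simp [Nat.sub_eq_zero_of_le hnt]
  have h1 := AddSubgroup.card_eq_card_quotient_mul_card_addSubgroup (shiftSpan h)
  rw [Nat.card_fun, Nat.card_zmod, Nat.card_fin] at h1
  have h2 := Nat.mul_le_mul_left (Nat.card ((Fin n → ZMod 2) ⧸ shiftSpan h)) (card_shiftSpan_le h)
  have h4 : 2 ^ n = 2 ^ (n - t) * 2 ^ t := by rw [← pow_add, Nat.sub_add_cancel hnt]
  rw [← h1, h4] at h2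
  have h3 := Nat.le_of_mul_le_mul_right h2 (by positivity)
  exact (Nat.lt_two_pow_self).le.trans h3

/-- For fixed translation parts, the proportion of sign functions that are nontrivial on every coset
decays exponentially in `n`, at a rate depending only on `t`. -/
lemma card_bad_signs_le {n t : ℕ} (h : Fin t → Fin n → ZMod 2) :
    (Nat.card {w : (Fin n → ZMod 2) → (Fin t → ℤˣ) //
        ∀ q : (Fin n → ZMod 2) ⧸ shiftSpan h, ∃ x : Fin n → ZMod 2,
          (x : (Fin n → ZMod 2) ⧸ shiftSpan h) = q ∧ w x ≠ 1} : ℝ)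
      ≤ (1 - ((2 : ℝ) ^ t)⁻¹ ^ 2 ^ t) ^ (n - t) *
        Nat.card ((Fin n → ZMod 2) → (Fin t → ℤˣ)) := by
  have hA : Nat.card (Fin t → ℤˣ) = 2 ^ t := by simp
  have hc := card_no_constant_coset (shiftSpan h) (1 : Fin t → ℤˣ)
  have hH := AddSubgroup.card_eq_card_quotient_mul_card_addSubgroup (shiftSpan h)
  have hS := card_shiftSpan_le h
  have hQ := sub_le_card_quotient h
  rw [Nat.card_fun (α := Fin n → ZMod 2), hA, hH]
  rw [hA] at hc
  set s := Nat.card (shiftSpan h)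
  set Q := Nat.card ((Fin n → ZMod 2) ⧸ shiftSpan h)
  have h2 : (1 : ℝ) ≤ 2 ^ t := one_le_pow₀ (by norm_num)
  have hi0 : (0 : ℝ) ≤ ((2 : ℝ) ^ t)⁻¹ := by positivity
  have hi1 : ((2 : ℝ) ^ t)⁻¹ ≤ 1 := inv_le_one_of_one_le₀ h2
  have hd : ((2 : ℝ) ^ t)⁻¹ ^ 2 ^ t ≤ ((2 : ℝ) ^ t)⁻¹ ^ s := pow_le_pow_of_le_one hi0 hi1 hS
  have hs1 : ((2 : ℝ) ^ t)⁻¹ ^ s ≤ 1 := pow_le_one₀ hi0 hi1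
  have hd0 : 0 ≤ ((2 : ℝ) ^ t)⁻¹ ^ 2 ^ t := by positivity
  calc _ ≤ ((((2 ^ t) ^ s - 1) ^ Q : ℕ) : ℝ) := by exact_mod_cast hc
    _ = (((2 : ℝ) ^ t) ^ s - 1) ^ Q := by
      rw [Nat.cast_pow, Nat.cast_sub (Nat.one_le_pow _ _ (by positivity))]
      push_cast
      rfl
    _ = (1 - ((2 : ℝ) ^ t)⁻¹ ^ s) ^ Q * ((2 : ℝ) ^ t) ^ (Q * s) := by
      rw [mul_comm Q s, pow_mul _ s Q, ← mul_pow]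
      congr 1
      rw [sub_mul, ← mul_pow, inv_mul_cancel₀ (by positivity), one_pow, one_mul]
    _ ≤ (1 - ((2 : ℝ) ^ t)⁻¹ ^ 2 ^ t) ^ (n - t) * ((2 : ℝ) ^ t) ^ (Q * s) := by
      gcongr
      calc _ ≤ (1 - ((2 : ℝ) ^ t)⁻¹ ^ 2 ^ t) ^ Q := by
            gcongr
        _ ≤ _ := pow_le_pow_of_le_one (by linarith) (by linarith) hQ
    _ = _ := by push_cast; rfl

/-- A `t`-tuple of signed translations, split into the translation parts and the joint sign
patterns. -/
def tupleEquiv (H : Type) (t : ℕ) :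
    (Fin t → SignedTranslation H) ≃ (Fin t → H) × (H → Fin t → ℤˣ) where
  toFun g := (fun i => (g i).shift, fun x i => (g i).sgn x)
  invFun p := fun i => ⟨fun x => p.2 x i, p.1 i⟩
  left_inv _ := rfl
  right_inv _ := rfl

/-- The tuples not satisfying `P` have exponentially small proportion, as soon as
`P` holds for every tuple with trivial signs on some coset. -/
lemma card_bad_le {n t : ℕ} (P : (Fin t → SignedTranslation (Fin n → ZMod 2)) → Prop)
    (hP : ∀ g : Fin t → SignedTranslation (Fin n → ZMod 2),
      ∀ q : (Fin n → ZMod 2) ⧸ shiftSpan (fun i => (g i).shift),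
      (∀ x : Fin n → ZMod 2, (x : (Fin n → ZMod 2) ⧸ shiftSpan (fun i => (g i).shift)) = q →
        ∀ i, (g i).sgn x = 1) → P g) :
    (Nat.card {g // ¬ P g} : ℝ) ≤ (1 - ((2 : ℝ) ^ t)⁻¹ ^ 2 ^ t) ^ (n - t) *
        Nat.card (Fin t → SignedTranslation (Fin n → ZMod 2)) := by
  let B (h : Fin t → Fin n → ZMod 2) := {w : (Fin n → ZMod 2) → (Fin t → ℤˣ) //
        ∀ q : (Fin n → ZMod 2) ⧸ shiftSpan h, ∃ x : Fin n → ZMod 2,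
          (x : (Fin n → ZMod 2) ⧸ shiftSpan h) = q ∧ w x ≠ 1}
  let F : {g // ¬ P g} → Σ h, B h := fun g => ⟨fun i => (g.1 i).shift, fun x i => (g.1 i).sgn x, by
    intro q
    by_contra! hq
    exact g.2 (hP g.1 q fun x hx i => congrFun (hq x hx) i)⟩
  let I : (Σ h, B h) → (Fin t → Fin n → ZMod 2) × ((Fin n → ZMod 2) → Fin t → ℤˣ) :=
    fun p => (p.1, p.2.1)
  have hF : Function.Injective F := by
    intro g g' h
    apply Subtype.ext
    apply (tupleEquiv _ _).injective
    exact congrArg I h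
  have h1 : Nat.card {g // ¬ P g} ≤ ∑ h, Nat.card (B h) := by
    rw [← Nat.card_sigma]
    exact Nat.card_le_card_of_injective F hF
  calc (Nat.card {g // ¬ P g} : ℝ) ≤ ∑ h, (Nat.card (B h) : ℝ) := by exact_mod_cast h1
    _ ≤ ∑ _h : Fin t → Fin n → ZMod 2, (1 - ((2 : ℝ) ^ t)⁻¹ ^ 2 ^ t) ^ (n - t) *
        Nat.card ((Fin n → ZMod 2) → (Fin t → ℤˣ)) :=
      Finset.sum_le_sum fun h _ => card_bad_signs_le h
    _ = _ := by
      rw [Nat.card_congr (tupleEquiv _ _), Nat.card_prod, Finset.sum_const, Finset.card_univ,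
        nsmul_eq_mul, ← Nat.card_eq_fintype_card]
      push_cast
      ring

/-- There is a sequence of finite groups `Gₙ` with nontrivial irreducible
unitary complex representations `ρₙ` such that for every fixed `t ≥ 1`, if `g₁, …, g_t` are
chosen independently and uniformly at random from `Gₙ`, then
`Pr[‖(1/t) Σᵢ ρₙ(gᵢ)‖_op = 1] → 1` as `n → ∞`. -/
theorem exists_seq_irreps_opNorm_eq_one_prob_tendsto_one :
    ∃ R : ℕ → FinGroupUnitaryRep,
      (∀ m, ∀ U : Submodule ℂ (R m).E,
          (∀ g : (R m).G, ∀ v ∈ U, (R m).rho g v ∈ U) → U = ⊥ ∨ U = ⊤) ∧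
      (∀ m, ∃ g : (R m).G, (R m).rho g ≠ 1) ∧
      (∀ t : ℕ, 1 ≤ t →
        Filter.Tendsto (fun m : ℕ =>
            (Nat.card {g : Fin t → (R m).G //
                ‖(t : ℂ)⁻¹ • ∑ i : Fin t,
                    (((R m).rho (g i)).toContinuousLinearEquiv.toContinuousLinearMap)‖
                  = 1} : ℝ) /
              (Fintype.card (Fin t → (R m).G) : ℝ))
          Filter.atTop (nhds 1)) := by
  refine ⟨fun n => ⟨SignedTranslation (Fin n → ZMod 2), EuclideanSpace ℂ (Fin n → ZMod 2),
    SignedTranslation.rep⟩, fun n U hU => SignedTranslation.rep_irreducible U hU,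
    fun n => SignedTranslation.rep_nontrivial, fun t ht => ?_⟩
  have hδ0 : (0 : ℝ) < ((2 : ℝ) ^ t)⁻¹ ^ 2 ^ t := by positivity
  have hδ1 : ((2 : ℝ) ^ t)⁻¹ ^ 2 ^ t ≤ 1 :=
    pow_le_one₀ (by positivity) (inv_le_one_of_one_le₀ (one_le_pow₀ (by norm_num)))
  have hlim : Filter.Tendsto (fun n : ℕ => 1 - (1 - ((2 : ℝ) ^ t)⁻¹ ^ 2 ^ t) ^ (n - t))
      Filter.atTop (nhds 1) := by
    have := (tendsto_pow_atTop_nhds_zero_of_lt_one (sub_nonneg.2 hδ1)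
      (sub_lt_self 1 hδ0)).comp (Filter.tendsto_sub_atTop_nat t)
    simpa using this.const_sub 1
  refine tendsto_of_tendsto_of_tendsto_of_le_of_le hlim tendsto_const_nhds ?_ ?_
  · intro n
    dsimp only
    rw [← Nat.card_eq_fintype_card]
    have hpos : (0 : ℝ) < Nat.card (Fin t → SignedTranslation (Fin n → ZMod 2)) := by
      exact_mod_cast Nat.card_pos
    rw [le_div_iff₀ hpos]
    have hbad := card_bad_le (n := n) (t := t) (fun g => ‖(t : ℂ)⁻¹ • ∑ i : Fin t,
        ((SignedTranslation.rep (g i)).toContinuousLinearEquiv.toContinuousLinearMap)‖ = 1)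
      (fun g q hq => SignedTranslation.norm_average_eq_one ht g _
        (shift_mem_shiftSpan _) q hq)
    have hsum := Nat.card_congr (Equiv.sumCompl
      (fun g : Fin t → SignedTranslation (Fin n → ZMod 2) => ‖(t : ℂ)⁻¹ • ∑ i : Fin t,
        ((SignedTranslation.rep (g i)).toContinuousLinearEquiv.toContinuousLinearMap)‖ = 1))
    rw [Nat.card_sum] at hsum
    have hsum' := congrArg (Nat.cast : ℕ → ℝ) hsum
    push_cast at hsum'
    linarith
  · intro n
    dsimp only
    rw [← Nat.card_eq_fintype_card]
    refine div_le_one_of_le₀ ?_ (by positivity)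
    exact_mod_cast Nat.card_le_card_of_injective _ Subtype.val_injective
end
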